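/- Let n ≥ 1 and let g_1, …, g_{n+1} : [-1,1] → [0,∞) be measurable functions. Then ∫_{S^n} ∏_{i=1}^{n+1} g_i(x_i) dσ_n(x) ≤ ∏_{i=1}^{n+1} ( ∫_{S^n} g_i(x_i)^2 dσ_n(x) )^{1/2}, where x_i denotes the i-th coordinate of the point x ∈ S^n ⊂ ℝ^{n+1}. -/

import Mathlib

open MeasureTheory Metric
open scoped ENNReal BigOperators

/-- The rotation-invariant (Haar) probability measure on the unit sphere
`S^n ⊂ ℝ^{n+1}`: the surface measure `volume.toSphere`, normalized to total mass `1`. -/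
noncomputable def sphereHaar (n : ℕ) :
    Measure (sphere (0 : EuclideanSpace ℝ (Fin (n + 1))) 1) :=
  ((volume : Measure (EuclideanSpace ℝ (Fin (n + 1)))).toSphere Set.univ)⁻¹ •
    (volume : Measure (EuclideanSpace ℝ (Fin (n + 1)))).toSphere

/-!
For polynomials `f_k` positive on `[-1, 1]`, run the heat flow of the sphere on each zonal function
`f_k(x_k)`; it acts on polynomials in one coordinate, on which the Laplacian is diagonalised, and it
preserves the mean and, by the minimum principle, positivity. The Laplacian is a sum of squares of
generators of plane rotations. Of these, only those moving `x_k` act on `f_k(x_k)`, so the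
derivative of `∫ ∏ √f_k` along the flow splits into one term for each pair of coordinates.
Integrating by parts along the rotation of that pair turns its term into the integral of a perfect
square, so `∫ ∏ √f_k` increases towards its value at the constants `∏ √(mean of f_k)`. With
`r = e^{-t}` as parameter the flow is polynomial in `r` and reaches these constants at `r = 0`.
Measurable `g_k` follow by approximating `g_k ^ 2` in `L¹` and Fatou's lemma.
-/

open Set Filter Polynomial
open scoped Topology Pointwise

/-! ### Calculus -/

section Calculus

theorem deriv_deriv_nonneg_of_isLocalMin {f : ℝ → ℝ} {a : ℝ} (hmin : IsLocalMin f a)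
    (hf : ContinuousAt f a) : 0 ≤ deriv (deriv f) a := by
  by_contra! hneg
  have hmax : IsLocalMax f a := isLocalMax_of_deriv_deriv_neg hneg hmin.deriv_eq_zero hf
  have hconst : f =ᶠ[𝓝 a] fun _ => f a := by
    filter_upwards [hmin, hmax] with x h₁ h₂ using le_antisymm h₂ h₁
  simp [hconst.deriv.deriv_eq] at hneg

theorem hasDerivAt_prod_sqrt {ι : Type*} (s : Finset ι) {u : ι → ℝ → ℝ} {u' : ι → ℝ} {t : ℝ}
    (hu : ∀ k ∈ s, HasDerivAt (u k) (u' k) t) (hpos : ∀ k ∈ s, 0 < u k t) :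
    HasDerivAt (fun τ => ∏ k ∈ s, √(u k τ))
      ((∏ k ∈ s, √(u k t)) * ∑ k ∈ s, u' k / (2 * u k t)) t := by
  classical
  refine (HasDerivAt.fun_finsetProd fun k hk => (hu k hk).sqrt (hpos k hk).ne').congr_deriv ?_
  rw [Finset.mul_sum]
  refine Finset.sum_congr rfl fun k hk => ?_
  have hs : √(u k t) ≠ 0 := (Real.sqrt_pos.2 (hpos k hk)).ne'
  rw [← Finset.mul_prod_erase s (fun k => √(u k t)) hk, smul_eq_mul]
  nth_rewrite 3 [← Real.sq_sqrt (hpos k hk).le]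
  field_simp

theorem deriv_nonpos_of_isMinOn_Icc_right {f : ℝ → ℝ} {f' a b : ℝ} (hab : a < b)
    (hmin : IsMinOn f (Icc a b) b) (hf : HasDerivAt f f' b) : f' ≤ 0 := by
  have hcone : a - b ∈ posTangentConeAt (Icc a b) b := by
    refine sub_mem_posTangentConeAt_of_segment_subset ?_
    rw [segment_symm, segment_eq_Icc hab.le]
  have h := hmin.localize.hasFDerivWithinAt_nonneg hf.hasFDerivAt.hasFDerivWithinAt hcone
  simp only [ContinuousLinearMap.toSpanSingleton_apply, smul_eq_mul] at h
  exact nonpos_of_mul_nonneg_right h (sub_neg.2 hab)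

theorem strict_parabolic_minimum_principle {Y : Type*} [TopologicalSpace Y] {K : Set Y}
    (hK : IsCompact K) {u u' : ℝ → Y → ℝ} {δ : ℝ}
    (hcont : ContinuousOn (Function.uncurry u) (Ici 0 ×ˢ K))
    (hderiv : ∀ t > 0, ∀ x ∈ K, HasDerivAt (u · x) (u' t x) t)
    (hmin : ∀ t > 0, ∀ x ∈ K, IsMinOn (u t) K x → 0 < u' t x) (h₀ : ∀ x ∈ K, δ ≤ u 0 x)
    {t : ℝ} (ht : 0 ≤ t) {x : Y} (hx : x ∈ K) : δ ≤ u t x := by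
  obtain ⟨⟨t₁, x₁⟩, ⟨ht₁, hx₁⟩, hmin₁⟩ := (isCompact_Icc.prod hK).exists_isMinOn
    ⟨(t, x), right_mem_Icc.2 ht, hx⟩ (hcont.mono (prod_mono_left Icc_subset_Ici_self))
  have hle : u t₁ x₁ ≤ u t x := hmin₁ (a := (t, x)) ⟨right_mem_Icc.2 ht, hx⟩
  rcases ht₁.1.eq_or_lt with rfl | hpos
  · exact (h₀ x₁ hx₁).trans hle
  · have hspace : IsMinOn (u t₁) K x₁ := fun y hy => hmin₁ (a := (t₁, y)) ⟨ht₁, hy⟩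
    have htime : IsMinOn (u · x₁) (Icc 0 t₁) t₁ := fun τ hτ =>
      hmin₁ (a := (τ, x₁)) ⟨⟨hτ.1, hτ.2.trans ht₁.2⟩, hx₁⟩
    exact absurd (deriv_nonpos_of_isMinOn_Icc_right hpos htime (hderiv t₁ hpos x₁ hx₁))
      (hmin t₁ hpos x₁ hx₁ hspace).not_ge

theorem parabolic_minimum_principle {Y : Type*} [TopologicalSpace Y] {K : Set Y}
    (hK : IsCompact K) {u u' : ℝ → Y → ℝ} {δ : ℝ}
    (hcont : ContinuousOn (Function.uncurry u) (Ici 0 ×ˢ K))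
    (hderiv : ∀ t > 0, ∀ x ∈ K, HasDerivAt (u · x) (u' t x) t)
    (hmin : ∀ t > 0, ∀ x ∈ K, IsMinOn (u t) K x → 0 ≤ u' t x) (h₀ : ∀ x ∈ K, δ ≤ u 0 x)
    {t : ℝ} (ht : 0 ≤ t) {x : Y} (hx : x ∈ K) : δ ≤ u t x := by
  have hperturbed : ∀ ε > 0, δ ≤ u t x + ε * t := fun ε hε =>
    strict_parabolic_minimum_principle hK (u := fun τ y => u τ y + ε * τ)
      (u' := fun τ y => u' τ y + ε)
      (hcont.add (by fun_prop))
      (fun τ hτ y hy => (hderiv τ hτ y hy).add (by simpa using (hasDerivAt_id τ).const_mul ε))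
      (fun τ hτ y hy h => add_pos_of_nonneg_of_pos
        (hmin τ hτ y hy fun z hz => by simpa using h hz) hε)
      (by simpa using h₀) ht hx
  have hlim : Tendsto (fun ε => u t x + ε * t) (𝓝[>] 0) (𝓝 (u t x)) := by
    refine Tendsto.mono_left ?_ nhdsWithin_le_nhds
    exact Continuous.tendsto' (by fun_prop) _ _ (by simp)
  exact ge_of_tendsto hlim (eventually_mem_nhdsWithin.mono hperturbed)

variable {X : Type*} [TopologicalSpace X] [CompactSpace X] [MeasurableSpace X]
  [OpensMeasurableSpace X] {μ : Measure X} [IsFiniteMeasure μ]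

theorem integrable_of_continuous {f : X → ℝ} (hf : Continuous f) : Integrable f μ :=
  hf.integrable_of_hasCompactSupport (HasCompactSupport.of_compactSpace f)

theorem hasDerivAt_integral_of_continuousOn {F F' : ℝ → X → ℝ} {s : Set ℝ} {t : ℝ}
    (hs : s ∈ 𝓝 t) (hF : ∀ τ ∈ s, Continuous (F τ))
    (hF' : ContinuousOn (Function.uncurry F') (s ×ˢ univ))
    (hderiv : ∀ τ ∈ s, ∀ x, HasDerivAt (F · x) (F' τ x) τ) :
    HasDerivAt (fun τ => ∫ x, F τ x ∂μ) (∫ x, F' t x ∂μ) t := by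
  obtain ⟨K, hK, hKs, hKcompact⟩ := local_compact_nhds hs
  obtain ⟨C, hC⟩ := (hKcompact.prod isCompact_univ).exists_bound_of_continuousOn
    (hF'.mono (prod_mono_left hKs))
  have ht : t ∈ s := mem_of_mem_nhds hs
  have hF't : Continuous (F' t) := continuousOn_univ.1 <|
    hF'.comp (f := fun x => (t, x)) (by fun_prop) fun x _ => ⟨ht, mem_univ x⟩
  exact (hasDerivAt_integral_of_dominated_loc_of_deriv_le (bound := fun _ => C) hK
    (by filter_upwards [hs] with τ hτ using (integrable_of_continuous (hF τ hτ)).1)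
    (integrable_of_continuous (hF t ht)) (integrable_of_continuous hF't).1
    (.of_forall fun x τ hτ => hC (τ, x) ⟨hτ, mem_univ x⟩) (integrable_const C)
    (.of_forall fun x τ hτ => hderiv τ (hKs hτ) x)).2

theorem integral_deriv_along_flow_eq_zero (φ : Flow ℝ X)
    (hφ : ∀ θ, MeasurePreserving (φ θ) μ μ) {G G' : X → ℝ} (hG : Continuous G)
    (hG' : Continuous G') (hderiv : ∀ x, HasDerivAt (fun θ => G (φ θ x)) (G' x) 0) :
    ∫ x, G' x ∂μ = 0 := by
  have hderiv' : ∀ θ x, HasDerivAt (fun τ => G (φ τ x)) (G' (φ θ x)) θ := fun θ x => by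
    have h := HasDerivAt.scomp_of_eq (h := fun τ : ℝ => τ - θ) θ (hderiv (φ θ x))
      ((hasDerivAt_id θ).sub_const θ) (sub_self θ).symm
    simpa [Function.comp_def, ← φ.map_add] using h
  have hconst : (fun θ => ∫ x, G (φ θ x) ∂μ) = fun _ => ∫ x, G x ∂μ := by
    funext θ
    have hGm : AEStronglyMeasurable G (μ.map (φ θ)) := by
      rw [(hφ θ).map_eq]; exact (integrable_of_continuous hG).1
    rw [← integral_map (hφ θ).measurable.aemeasurable hGm, (hφ θ).map_eq]
  have h := hasDerivAt_integral_of_continuousOn (μ := μ) (t := 0) univ_mem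
    (F := fun θ x => G (φ θ x)) (F' := fun θ x => G' (φ θ x))
    (fun θ _ => hG.comp (φ.continuous_toFun θ))
    (hG'.comp φ.cont').continuousOn fun θ _ => hderiv' θ
  rw [hconst] at h
  simpa using h.unique (hasDerivAt_const 0 _)

end Calculus

/-! ### The Laplacian of the sphere on polynomials in one coordinate -/

section ZonalLaplacian

/-- The Laplacian of `S^n` acting on functions `p(x_i)` of one coordinate. -/
noncomputable def zonalLaplacian (n : ℕ) : ℝ[X] →ₗ[ℝ] ℝ[X] :=
  LinearMap.mulLeft ℝ (1 - X ^ 2) ∘ₗ derivative ∘ₗ derivative -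
    (n : ℝ) • LinearMap.mulLeft ℝ X ∘ₗ derivative

theorem zonalLaplacian_apply (n : ℕ) (p : ℝ[X]) :
    zonalLaplacian n p = (1 - X ^ 2) * derivative (derivative p) - (n : ℝ) • (X * derivative p) :=
  rfl

theorem eval_zonalLaplacian (n : ℕ) (p : ℝ[X]) (x : ℝ) :
    (zonalLaplacian n p).eval x =
      (1 - x ^ 2) * (derivative (derivative p)).eval x - n * (x * (derivative p).eval x) := by
  simp [zonalLaplacian_apply]

theorem coeff_zonalLaplacian (n : ℕ) (p : ℝ[X]) (d : ℕ) :
    (zonalLaplacian n p).coeff d =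
      (d + 2) * (d + 1) * p.coeff (d + 2) - d * (d + n - 1 : ℝ) * p.coeff d := by
  have hX : (X * derivative p).coeff d = d * p.coeff d := by
    cases d with
    | zero => simp
    | succ d => simp [coeff_X_mul, coeff_derivative]; ring
  have hXX : (X ^ 2 * derivative (derivative p)).coeff d = d * (d - 1) * p.coeff d := by
    rcases d with _ | _ | d
    · simp
    · simp [sq, mul_assoc]
    · simp [coeff_X_pow_mul, coeff_derivative]; ring
  rw [zonalLaplacian_apply, sub_mul, coeff_sub, coeff_sub, coeff_smul, hX, hXX, one_mul,
    coeff_derivative, coeff_derivative]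
  push_cast
  rw [smul_eq_mul]
  ring

/-- The eigenvalue of `-zonalLaplacian n` on its eigenpolynomials of degree `m`. The
subtraction truncates only at `m = n = 0`, where the product vanishes anyway. -/
def zonalEigenvalue (n m : ℕ) : ℕ := m * (m + n - 1)

theorem cast_zonalEigenvalue (n m : ℕ) : (zonalEigenvalue n m : ℝ) = m * (m + n - 1) := by
  rcases m with _ | m
  · simp [zonalEigenvalue]
  · rw [zonalEigenvalue, show m + 1 + n - 1 = m + n by omega]
    push_cast
    ring

theorem zonalEigenvalue_strictMono {n : ℕ} (hn : 1 ≤ n) : StrictMono (zonalEigenvalue n) :=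
  strictMono_nat_of_lt_succ fun m => by
    obtain ⟨k, rfl⟩ := Nat.exists_eq_add_of_le' hn
    simp only [zonalEigenvalue]
    rw [show m + (k + 1) - 1 = m + k by omega, show m + 1 + (k + 1) - 1 = m + k + 1 by omega]
    nlinarith

theorem zonalEigenvalue_natDegree {n : ℕ} {p : ℝ[X]} (hp₀ : p ≠ 0) {a : ℝ}
    (hp : zonalLaplacian n p = -a • p) : (zonalEigenvalue n p.natDegree : ℝ) = a := by
  have hcoeff := congrArg (coeff · p.natDegree) hp
  simp only [coeff_zonalLaplacian, coeff_smul, smul_eq_mul, ← cast_zonalEigenvalue,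
    coeff_eq_zero_of_natDegree_lt (Nat.lt_add_of_pos_right two_pos), mul_zero, zero_sub,
    neg_mul, neg_inj] at hcoeff
  exact mul_right_cancel₀ (leadingCoeff_ne_zero.2 hp₀) hcoeff

theorem natDegree_eq_of_zonalLaplacian_eq {n m : ℕ} (hn : 1 ≤ n) {p : ℝ[X]} (hp₀ : p ≠ 0)
    (hp : zonalLaplacian n p = -(zonalEigenvalue n m : ℝ) • p) : p.natDegree = m :=
  (zonalEigenvalue_strictMono hn).injective (by exact_mod_cast zonalEigenvalue_natDegree hp₀ hp)

theorem exists_eq_C_of_zonalLaplacian_eq_zero {n : ℕ} (hn : 1 ≤ n) {p : ℝ[X]}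
    (hp : zonalLaplacian n p = 0) : ∃ a, p = C a := by
  rcases eq_or_ne p 0 with rfl | hp₀
  · exact ⟨0, C_0.symm⟩
  · exact ⟨_, eq_C_of_natDegree_eq_zero <| natDegree_eq_of_zonalLaplacian_eq hn hp₀ <| by
      simp [hp, zonalEigenvalue]⟩

theorem exists_ne_zero_zonalLaplacian_eq (n m : ℕ) :
    ∃ p ≠ 0, zonalLaplacian n p = -(zonalEigenvalue n m : ℝ) • p := by
  let T : ℝ[X] →ₗ[ℝ] ℝ[X] := zonalLaplacian n + (zonalEigenvalue n m : ℝ) • LinearMap.id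
  have hT : ∀ p ∈ degreeLT ℝ (m + 1), T p ∈ degreeLT ℝ m := fun p hp => by
    rw [mem_degreeLT, degree_lt_iff_coeff_zero] at hp ⊢
    intro d hd
    simp only [T, LinearMap.add_apply, LinearMap.smul_apply, LinearMap.id_apply, coeff_add,
      coeff_smul, coeff_zonalLaplacian, hp (d + 2) (by omega), smul_eq_mul, cast_zonalEigenvalue]
    rcases hd.eq_or_lt with rfl | hd
    · ring
    · simp [hp d hd]
  have hdim : Module.finrank ℝ (degreeLT ℝ m) < Module.finrank ℝ (degreeLT ℝ (m + 1)) := by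
    simp [(degreeLTEquiv ℝ _).finrank_eq]
  obtain ⟨⟨p, hp⟩, hker, hp₀⟩ := Submodule.exists_mem_ne_zero_of_ne_bot
    (LinearMap.ker_ne_bot_of_finrank_lt (f := T.restrict hT) hdim)
  refine ⟨p, by simpa using hp₀, ?_⟩
  have hTp : T p = 0 := congrArg Subtype.val (LinearMap.mem_ker.1 hker)
  rw [neg_smul]
  exact eq_neg_of_add_eq_zero_left hTp

theorem iSup_eigenspace_zonalLaplacian {n : ℕ} (hn : 1 ≤ n) :
    ⨆ m, Module.End.eigenspace (zonalLaplacian n) (-(zonalEigenvalue n m : ℝ)) = ⊤ := by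
  choose q hq₀ hq using exists_ne_zero_zonalLaplacian_eq n
  let S : Polynomial.Sequence ℝ :=
    { elems' := q
      degree_eq' := fun m => by
        rw [degree_eq_natDegree (hq₀ m), natDegree_eq_of_zonalLaplacian_eq hn (hq₀ m) (hq m)] }
  rw [← top_le_iff, ← S.span fun m => (leadingCoeff_ne_zero.2 (hq₀ m)).isUnit, Submodule.span_le]
  rintro _ ⟨m, rfl⟩
  exact Submodule.mem_iSup_of_mem m (Module.End.mem_eigenspace_iff.2 (hq m))

/-- The second derivative at `θ = 0` of `p (x cos θ + y sin θ)`. -/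
noncomputable def arcSecondDeriv (p : ℝ[X]) (x y : ℝ) : ℝ :=
  (derivative (derivative p)).eval x * y ^ 2 - (derivative p).eval x * x

theorem deriv_deriv_eval_arc (p : ℝ[X]) (x y : ℝ) :
    deriv (deriv fun θ => p.eval (x * Real.cos θ + y * Real.sin θ)) 0 = arcSecondDeriv p x y := by
  have harc (θ : ℝ) : HasDerivAt (fun θ => x * Real.cos θ + y * Real.sin θ)
      (y * Real.cos θ - x * Real.sin θ) θ :=
    (((Real.hasDerivAt_cos θ).const_mul x).add ((Real.hasDerivAt_sin θ).const_mul y)).congr_deriv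
      (by ring)
  have hvel : HasDerivAt (fun θ => y * Real.cos θ - x * Real.sin θ) (-x) 0 :=
    (((Real.hasDerivAt_cos 0).const_mul y).sub ((Real.hasDerivAt_sin 0).const_mul x)).congr_deriv
      (by simp)
  have hderiv : deriv (fun θ => p.eval (x * Real.cos θ + y * Real.sin θ)) = fun θ =>
      (derivative p).eval (x * Real.cos θ + y * Real.sin θ) * (y * Real.cos θ - x * Real.sin θ) :=
    funext fun θ => ((p.hasDerivAt _).comp θ (harc θ)).deriv
  rw [hderiv]
  refine ((((derivative p).hasDerivAt _).comp 0 (harc 0)).mul hvel).deriv.trans ?_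
  simp only [arcSecondDeriv, Function.comp_apply, Real.cos_zero, Real.sin_zero]
  ring_nf

theorem arcSecondDeriv_nonneg_of_isMinOn {p : ℝ[X]} {x y : ℝ} (hmin : IsMinOn p.eval (Icc (-1) 1) x)
    (hxy : x ^ 2 + y ^ 2 ≤ 1) : 0 ≤ arcSecondDeriv p x y := by
  have harc (θ : ℝ) : x * Real.cos θ + y * Real.sin θ ∈ Icc (-1 : ℝ) 1 := by
    rw [mem_Icc, ← abs_le, ← sq_le_one_iff_abs_le_one]
    nlinarith [sq_nonneg (x * Real.sin θ - y * Real.cos θ), Real.sin_sq_add_cos_sq θ]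
  rw [← deriv_deriv_eval_arc]
  refine deriv_deriv_nonneg_of_isLocalMin (.of_forall fun θ => ?_) (by fun_prop)
  simpa using hmin (harc θ)

theorem zonalLaplacian_nonneg_of_isMinOn {n : ℕ} (hn : 1 ≤ n) {p : ℝ[X]} {x : ℝ}
    (hx : x ∈ Icc (-1) 1) (hmin : IsMinOn p.eval (Icc (-1) 1) x) :
    0 ≤ (zonalLaplacian n p).eval x := by
  have hx2 : x ^ 2 ≤ 1 := (sq_le_one_iff_abs_le_one x).2 (abs_le.2 hx)
  have hradial : 0 ≤ arcSecondDeriv p x 0 := arcSecondDeriv_nonneg_of_isMinOn hmin (by linarith)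
  have htangent : 0 ≤ arcSecondDeriv p x √(1 - x ^ 2) :=
    arcSecondDeriv_nonneg_of_isMinOn hmin (by rw [Real.sq_sqrt (by linarith)]; linarith)
  have hsplit : (zonalLaplacian n p).eval x =
      arcSecondDeriv p x √(1 - x ^ 2) + (n - 1) * arcSecondDeriv p x 0 := by
    rw [eval_zonalLaplacian, arcSecondDeriv, arcSecondDeriv, Real.sq_sqrt (by linarith)]
    ring
  have hn' : (0 : ℝ) ≤ n - 1 := sub_nonneg.2 (by exact_mod_cast hn)
  rw [hsplit]
  positivity

end ZonalLaplacian

/-! ### The heat flow on polynomials in one coordinate -/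

section Heat

variable {n : ℕ} {q : ℕ →₀ ℝ[X]}

/-- Each `q m` is zero or an eigenpolynomial of eigenvalue `-zonalEigenvalue n m`, so that
`∑ m, q m` is the spectral decomposition of a polynomial. -/
def IsEigenfamily (n : ℕ) (q : ℕ →₀ ℝ[X]) : Prop :=
  ∀ m, zonalLaplacian n (q m) = -(zonalEigenvalue n m : ℝ) • q m

/-- The solution at time `t` of the heat equation `∂ₜu = zonalLaplacian n u` with initial value
`∑ m, q m`, where `q m` is an eigenpolynomial of eigenvalue `-zonalEigenvalue n m`. It is written in
the variable `r = e⁻ᵗ ∈ [0, 1]`, in which it is polynomial and `r = 0` stands for infinite time. -/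
noncomputable def heat (n : ℕ) (q : ℕ →₀ ℝ[X]) (r : ℝ) : ℝ[X] :=
  q.sum fun m p => r ^ zonalEigenvalue n m • p

theorem heat_one (n : ℕ) (q : ℕ →₀ ℝ[X]) : heat n q 1 = q.sum fun _ p => p := by
  simp [heat]

theorem exists_isEigenfamily_heat_one_eq (hn : 1 ≤ n) (p : ℝ[X]) :
    ∃ q, IsEigenfamily n q ∧ heat n q 1 = p := by
  obtain ⟨q, hq, hsum⟩ := (Submodule.mem_iSup_iff_exists_finsupp _ p).1 <|
    iSup_eigenspace_zonalLaplacian hn ▸ Submodule.mem_top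
  exact ⟨q, fun m => Module.End.mem_eigenspace_iff.1 (hq m), (heat_one n q).trans hsum⟩

theorem eval_heat (n : ℕ) (q : ℕ →₀ ℝ[X]) (r x : ℝ) :
    (heat n q r).eval x = ∑ m ∈ q.support, r ^ zonalEigenvalue n m * (q m).eval x := by
  simp [heat, Finsupp.sum, eval_finsetSum]

theorem continuous_eval_heat (n : ℕ) (q : ℕ →₀ ℝ[X]) :
    Continuous fun z : ℝ × ℝ => (heat n q z.1).eval z.2 := by
  simp only [eval_heat]
  fun_prop

theorem zonalLaplacian_heat (hq : IsEigenfamily n q) (r : ℝ) :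
    zonalLaplacian n (heat n q r) =
      -∑ m ∈ q.support, (r ^ zonalEigenvalue n m * zonalEigenvalue n m) • q m := by
  simp only [heat, Finsupp.sum, map_sum, map_smul, hq _, neg_smul, smul_neg, smul_smul,
    Finset.sum_neg_distrib]

theorem continuous_eval_zonalLaplacian_heat (hq : IsEigenfamily n q) :
    Continuous fun z : ℝ × ℝ => (zonalLaplacian n (heat n q z.1)).eval z.2 := by
  simp only [zonalLaplacian_heat hq, eval_neg, eval_finsetSum, eval_smul, smul_eq_mul]
  fun_prop

theorem hasDerivAt_eval_heat (hq : IsEigenfamily n q) {r : ℝ} (hr : r ≠ 0) (x : ℝ) :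
    HasDerivAt (fun r => (heat n q r).eval x)
      (-(r⁻¹ * (zonalLaplacian n (heat n q r)).eval x)) r := by
  simp only [eval_heat, zonalLaplacian_heat hq, eval_neg, eval_finsetSum, eval_smul, smul_eq_mul,
    mul_neg, neg_neg, Finset.mul_sum]
  refine HasDerivAt.fun_sum fun m _ => ((hasDerivAt_pow _ r).mul_const _).congr_deriv ?_
  cases h : zonalEigenvalue n m with
  | zero => simp
  | succ l =>
    rw [pow_succ, Nat.add_sub_cancel]
    field_simp

theorem exists_heat_zero_eq_C (hn : 1 ≤ n) (hq : IsEigenfamily n q) :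
    ∃ a, heat n q 0 = C a := by
  refine exists_eq_C_of_zonalLaplacian_eq_zero hn ?_
  rw [zonalLaplacian_heat hq, neg_eq_zero]
  refine Finset.sum_eq_zero fun m _ => ?_
  rcases eq_or_ne (zonalEigenvalue n m) 0 with h | h <;> simp [h]

theorem map_heat_eq_map_heat_one (hq : IsEigenfamily n q) {l : ℝ[X] →ₗ[ℝ] ℝ}
    (hl : ∀ p, l (zonalLaplacian n p) = 0) (r : ℝ) :
    l (heat n q r) = l (heat n q 1) := by
  simp only [heat, Finsupp.sum, map_sum, map_smul]
  refine Finset.sum_congr rfl fun m _ => ?_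
  have hm := hl (q m)
  rw [hq m, map_smul, smul_eq_mul, mul_eq_zero, neg_eq_zero, Nat.cast_eq_zero] at hm
  rcases hm with h | h <;> simp [h]

theorem le_eval_heat (hn : 1 ≤ n) (hq : IsEigenfamily n q) {δ : ℝ}
    (hδ : ∀ x ∈ Icc (-1 : ℝ) 1, δ ≤ (heat n q 1).eval x) {r : ℝ} (hr : r ∈ Ioc (0 : ℝ) 1)
    {x : ℝ} (hx : x ∈ Icc (-1 : ℝ) 1) : δ ≤ (heat n q r).eval x := by
  have hbound : δ ≤ (heat n q (Real.exp (- -Real.log r))).eval x :=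
    parabolic_minimum_principle isCompact_Icc (u := fun t x => (heat n q (Real.exp (-t))).eval x)
      (u' := fun t x => (zonalLaplacian n (heat n q (Real.exp (-t)))).eval x)
      ((continuous_eval_heat n q).comp (f := fun z : ℝ × ℝ => (Real.exp (-z.1), z.2))
        (by fun_prop)).continuousOn
      (fun t _ y _ => by
        have h := (hasDerivAt_eval_heat hq (Real.exp_ne_zero (-t)) y).scomp t (hasDerivAt_neg t).exp
        exact h.congr_deriv (by simp [mul_comm]))
      (fun _ _ _ hy h => zonalLaplacian_nonneg_of_isMinOn hn hy h)
      (by simpa using hδ) (neg_nonneg.2 (Real.log_nonpos hr.1.le hr.2)) hx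
  rwa [neg_neg, Real.exp_log hr.1] at hbound

end Heat

/-! ### Integration by parts along rotations -/

section Sphere

/-- The unit sphere `S^n` of `ℝ^{n+1}`. -/
abbrev UnitSphere (n : ℕ) := sphere (0 : EuclideanSpace ℝ (Fin (n + 1))) 1

variable {n : ℕ}

instance (n : ℕ) : IsProbabilityMeasure (sphereHaar n) :=
  have : NeZero (volume : Measure (EuclideanSpace ℝ (Fin (n + 1)))).toSphere :=
    ⟨Measure.toSphere_ne_zero _⟩
  isProbabilityMeasureSMul

theorem sum_sq_coord (x : UnitSphere n) : ∑ i, x.1 i ^ 2 = 1 := by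
  have h := norm_eq_of_mem_sphere x
  rw [EuclideanSpace.norm_eq, Real.sqrt_eq_one] at h
  simpa using h

theorem coord_mem_Icc (x : UnitSphere n) (i : Fin (n + 1)) : x.1 i ∈ Icc (-1 : ℝ) 1 := by
  rw [mem_Icc, ← abs_le, ← sq_le_one_iff_abs_le_one, ← sum_sq_coord x]
  exact Finset.single_le_sum (f := fun i => x.1 i ^ 2) (fun _ _ => sq_nonneg _) (Finset.mem_univ i)

theorem measurePreserving_toSphere {E : Type*} [NormedAddCommGroup E] [InnerProductSpace ℝ E]
    [FiniteDimensional ℝ E] [MeasurableSpace E] [BorelSpace E] (A : E ≃ₗᵢ[ℝ] E)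
    {R : sphere (0 : E) 1 → sphere (0 : E) 1} (hR : ∀ x, (R x : E) = A x) :
    MeasurePreserving R (volume : Measure E).toSphere (volume : Measure E).toSphere := by
  have hRm : Measurable R := by
    have hcoe : Measurable fun x => (R x : E) := by
      simpa only [hR, Function.comp_def] using A.continuous.measurable.comp measurable_subtype_coe
    exact hcoe.subtype_mk
  refine ⟨hRm, Measure.ext fun s hs => ?_⟩
  have himage : Subtype.val '' (R ⁻¹' s) = A.symm '' (Subtype.val '' s) := by
    rw [A.symm.image_eq_preimage_symm]
    ext x
    constructor
    · rintro ⟨y, hy, rfl⟩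
      exact ⟨R y, hy, hR y⟩
    · rintro ⟨y, hy, hyx⟩
      have hx : x ∈ sphere (0 : E) 1 := by
        rw [mem_sphere_zero_iff_norm, ← A.norm_map]
        exact hyx ▸ norm_eq_of_mem_sphere y
      have hRx : R ⟨x, hx⟩ = y := Subtype.ext ((hR _).trans hyx.symm)
      exact ⟨⟨x, hx⟩, by rwa [mem_preimage, hRx], rfl⟩
  have hcone : Ioo (0 : ℝ) 1 • (A.symm '' (Subtype.val '' s)) =
      A.symm '' (Ioo (0 : ℝ) 1 • (Subtype.val '' s)) :=
    (image_image2_distrib_right fun r y => A.symm.map_smul r y).symm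
  rw [Measure.map_apply hRm hs, Measure.toSphere_apply' _ (hRm hs), Measure.toSphere_apply' _ hs,
    himage, hcone, A.symm.image_eq_preimage_symm]
  exact congrArg _ (A.measurePreserving.measure_preimage_equiv (f := A.toMeasurableEquiv) _)

theorem sum_sq_planeRotation {ι : Type*} [Fintype ι] [DecidableEq ι] {i j : ι} (hij : i ≠ j)
    (θ : ℝ) (x : ι → ℝ) :
    ∑ k, (if k = i then Real.cos θ * x i + Real.sin θ * x j
      else if k = j then Real.cos θ * x j - Real.sin θ * x i else x k) ^ 2 = ∑ k, x k ^ 2 := by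
  have hsplit (y : ι → ℝ) : ∑ k, y k =
      y i + (y j + ∑ k ∈ (Finset.univ.erase i).erase j, y k) := by
    rw [Finset.add_sum_erase _ _ (Finset.mem_erase.2 ⟨hij.symm, Finset.mem_univ j⟩),
      Finset.add_sum_erase _ _ (Finset.mem_univ i)]
  rw [hsplit, hsplit (fun k => x k ^ 2), if_pos rfl, if_neg hij.symm, if_pos rfl,
    Finset.sum_congr rfl fun k hk => by
      rw [if_neg (Finset.ne_of_mem_erase (Finset.mem_of_mem_erase hk)),
        if_neg (Finset.ne_of_mem_erase hk)]]
  linear_combination (x i ^ 2 + x j ^ 2) * Real.cos_sq_add_sin_sq θ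

/-- The rotation by the angle `θ` in the plane of the coordinates `i` and `j`. -/
noncomputable def planeRotation {ι : Type*} [Fintype ι] [DecidableEq ι] {i j : ι} (hij : i ≠ j)
    (θ : ℝ) : EuclideanSpace ℝ ι ≃ₗᵢ[ℝ] EuclideanSpace ℝ ι :=
  LinearIsometry.toLinearIsometryEquiv
    { toFun := fun x => WithLp.toLp 2 fun k =>
        if k = i then Real.cos θ * x i + Real.sin θ * x j
        else if k = j then Real.cos θ * x j - Real.sin θ * x i else x k
      map_add' := fun x y => by ext k; simp; split_ifs <;> ring
      map_smul' := fun a x => by ext k; simp; split_ifs <;> ring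
      norm_map' := fun x => by
        simpa [EuclideanSpace.norm_eq] using congrArg Real.sqrt (sum_sq_planeRotation hij θ x) } rfl

theorem planeRotation_apply {ι : Type*} [Fintype ι] [DecidableEq ι] {i j : ι} (hij : i ≠ j)
    (θ : ℝ) (x : EuclideanSpace ℝ ι) (k : ι) :
    planeRotation hij θ x k =
      if k = i then Real.cos θ * x i + Real.sin θ * x j
      else if k = j then Real.cos θ * x j - Real.sin θ * x i else x k :=
  rfl

/-- The flow on `S^n` by the rotations `planeRotation`. -/
noncomputable def rotationFlow {i j : Fin (n + 1)} (hij : i ≠ j) : Flow ℝ (UnitSphere n) where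
  toFun θ x := ⟨planeRotation hij θ x, by simp⟩
  cont' := by
    refine continuous_induced_rng.2 ((PiLp.continuous_toLp 2 _).comp (continuous_pi fun k => ?_))
    change Continuous fun z : ℝ × UnitSphere n => planeRotation hij z.1 z.2 k
    simp only [planeRotation_apply]
    split_ifs <;> fun_prop
  map_add' θ₁ θ₂ x := by
    ext k
    simp only [planeRotation_apply, Real.cos_add, Real.sin_add, if_neg hij.symm, if_true]
    split_ifs <;> ring
  map_zero' x := by
    ext k
    simp only [planeRotation_apply, Real.cos_zero, Real.sin_zero]
    split_ifs with hi hj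
    · rw [one_mul, zero_mul, add_zero, hi]
    · rw [one_mul, zero_mul, sub_zero, hj]
    · rfl

theorem measurePreserving_rotationFlow {i j : Fin (n + 1)} (hij : i ≠ j) (θ : ℝ) :
    MeasurePreserving (rotationFlow hij θ) (sphereHaar n) (sphereHaar n) :=
  (measurePreserving_toSphere (planeRotation hij θ) fun _ => rfl).smul_measure _

theorem hasDerivAt_rotationFlow {i j : Fin (n + 1)} (hij : i ≠ j) (x : UnitSphere n)
    (k : Fin (n + 1)) :
    HasDerivAt (fun θ => (rotationFlow hij θ x).1 k)
      (if k = i then x.1 j else if k = j then -x.1 i else 0) 0 := by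
  have hrot (a b : ℝ) : HasDerivAt (fun θ => Real.cos θ * a + Real.sin θ * b) b 0 :=
    (((Real.hasDerivAt_cos 0).mul_const a).add ((Real.hasDerivAt_sin 0).mul_const b)).congr_deriv
      (by simp)
  change HasDerivAt (fun θ => planeRotation hij θ x.1 k) _ 0
  simp only [planeRotation_apply]
  split_ifs
  · exact hrot _ _
  · simpa [sub_eq_add_neg] using hrot (x.1 j) (-x.1 i)
  · exact hasDerivAt_const 0 _

theorem hasDerivAt_eval_rotationFlow {i j : Fin (n + 1)} (hij : i ≠ j) (p : ℝ[X])
    (x : UnitSphere n) (k : Fin (n + 1)) :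
    HasDerivAt (fun θ => p.eval ((rotationFlow hij θ x).1 k))
      ((derivative p).eval (x.1 k) *
        if k = i then x.1 j else if k = j then -x.1 i else 0) 0 :=
  (p.hasDerivAt _).comp_of_eq 0 (hasDerivAt_rotationFlow hij x k)
    (by rw [(rotationFlow hij).map_zero_apply])

theorem integral_arcSecondDeriv {i j : Fin (n + 1)} (hij : i ≠ j) (p : ℝ[X]) :
    ∫ x : UnitSphere n, arcSecondDeriv p (x.1 i) (x.1 j) ∂sphereHaar n = 0 := by
  refine integral_deriv_along_flow_eq_zero (rotationFlow hij) (measurePreserving_rotationFlow hij)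
    (G := fun x => (derivative p).eval (x.1 i) * x.1 j) (by fun_prop)
    (by unfold arcSecondDeriv; fun_prop) fun x => ?_
  refine ((hasDerivAt_eval_rotationFlow hij _ x i).mul
    (hasDerivAt_rotationFlow hij x j)).congr_deriv ?_
  simp only [arcSecondDeriv, (rotationFlow hij).map_zero_apply, if_true, if_neg hij.symm]
  ring

theorem eval_zonalLaplacian_coord (p : ℝ[X]) (x : UnitSphere n) (i : Fin (n + 1)) :
    (zonalLaplacian n p).eval (x.1 i) =
      ∑ j ∈ Finset.univ.erase i, arcSecondDeriv p (x.1 i) (x.1 j) := by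
  have hrest : ∑ j ∈ Finset.univ.erase i, x.1 j ^ 2 = 1 - x.1 i ^ 2 := by
    rw [← sum_sq_coord x, ← Finset.add_sum_erase _ _ (Finset.mem_univ i), add_sub_cancel_left]
  simp only [arcSecondDeriv, Finset.sum_sub_distrib, ← Finset.mul_sum, hrest, Finset.sum_const,
    Finset.card_erase_of_mem (Finset.mem_univ i), Finset.card_fin, Nat.add_sub_cancel,
    eval_zonalLaplacian, nsmul_eq_mul]
  ring

theorem integral_zonalLaplacian_coord (p : ℝ[X]) (i : Fin (n + 1)) :
    ∫ x : UnitSphere n, (zonalLaplacian n p).eval (x.1 i) ∂sphereHaar n = 0 := by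
  simp only [eval_zonalLaplacian_coord]
  rw [integral_finsetSum _ fun j _ =>
    integrable_of_continuous (by unfold arcSecondDeriv; fun_prop)]
  exact Finset.sum_eq_zero fun j hj => integral_arcSecondDeriv (Finset.ne_of_mem_erase hj).symm p

/-- The derivative at `θ = 0` of `log (p (x cos θ + y sin θ))`. -/
noncomputable def arcLogDeriv (p : ℝ[X]) (x y : ℝ) : ℝ :=
  (derivative p).eval x * y / p.eval x

theorem hasDerivAt_arcLogDeriv {p : ℝ[X]} {a b : ℝ → ℝ} {x y t : ℝ} (ha : HasDerivAt a y t)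
    (hb : HasDerivAt b (-x) t) (hat : a t = x) (hbt : b t = y) (hp : p.eval x ≠ 0) :
    HasDerivAt (fun τ => arcLogDeriv p (a τ) (b τ))
      (arcSecondDeriv p x y / p.eval x - arcLogDeriv p x y ^ 2) t := by
  subst hat hbt
  refine (((((derivative p).hasDerivAt _).comp t ha).fun_mul hb).div
    ((p.hasDerivAt _).comp t ha) hp).congr_deriv ?_
  simp only [arcSecondDeriv, arcLogDeriv, Function.comp_apply]
  field_simp
  ring

variable {f : Fin (n + 1) → ℝ[X]}

/-- The product `∏ₖ fₖ(xₖ)^{1/2}` as a function on the sphere. -/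
noncomputable def sqrtProd (f : Fin (n + 1) → ℝ[X]) (x : UnitSphere n) : ℝ :=
  ∏ k, √((f k).eval (x.1 k))

theorem sqrtProd_nonneg (f : Fin (n + 1) → ℝ[X]) (x : UnitSphere n) : 0 ≤ sqrtProd f x :=
  Finset.prod_nonneg fun _ _ => Real.sqrt_nonneg _

theorem continuous_sqrtProd (f : Fin (n + 1) → ℝ[X]) : Continuous (sqrtProd f) := by
  unfold sqrtProd
  fun_prop

theorem hasDerivAt_sqrtProd_rotationFlow (hf : ∀ k, ∀ x ∈ Icc (-1 : ℝ) 1, 0 < (f k).eval x)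
    {i j : Fin (n + 1)} (hij : i ≠ j) (x : UnitSphere n) :
    HasDerivAt (fun θ => sqrtProd f (rotationFlow hij θ x))
      (sqrtProd f x *
        ((arcLogDeriv (f i) (x.1 i) (x.1 j) + arcLogDeriv (f j) (x.1 j) (-x.1 i)) / 2)) 0 := by
  refine (hasDerivAt_prod_sqrt _ (fun k _ => hasDerivAt_eval_rotationFlow hij (f k) x k)
    fun k _ => hf k _ (coord_mem_Icc _ k)).congr_deriv ?_
  simp only [(rotationFlow hij).map_zero_apply]
  rw [Finset.sum_eq_add i j hij (fun k _ hk => by simp [hk]) (by simp) (by simp), if_pos rfl,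
    if_neg hij.symm, if_pos rfl]
  simp only [sqrtProd, arcLogDeriv]
  ring

theorem integral_sqrtProd_mul_arcSecondDeriv_nonneg
    (hf : ∀ k, ∀ x ∈ Icc (-1 : ℝ) 1, 0 < (f k).eval x) {i j : Fin (n + 1)} (hij : i ≠ j) :
    0 ≤ ∫ x, sqrtProd f x * (arcSecondDeriv (f i) (x.1 i) (x.1 j) / (f i).eval (x.1 i) +
      arcSecondDeriv (f j) (x.1 j) (x.1 i) / (f j).eval (x.1 j)) ∂sphereHaar n := by
  have hne (k) (x : UnitSphere n) : (f k).eval (x.1 k) ≠ 0 := (hf k _ (coord_mem_Icc x k)).ne'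
  let A (x : UnitSphere n) := arcLogDeriv (f i) (x.1 i) (x.1 j)
  let B (x : UnitSphere n) := arcLogDeriv (f j) (x.1 j) (-x.1 i)
  let D (x : UnitSphere n) := arcSecondDeriv (f i) (x.1 i) (x.1 j) / (f i).eval (x.1 i) +
    arcSecondDeriv (f j) (x.1 j) (x.1 i) / (f j).eval (x.1 j)
  have hA : Continuous A := .div (by fun_prop) (by fun_prop) (hne i)
  have hB : Continuous B := .div (by fun_prop) (by fun_prop) (hne j)
  have hD : Continuous D := by
    unfold D arcSecondDeriv
    exact .add (.div (by fun_prop) (by fun_prop) (hne i)) (.div (by fun_prop) (by fun_prop) (hne j))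
  have hF := continuous_sqrtProd f
  -- With `F = sqrtProd f`, differentiating `F` contributes `F (A + B)² / 2` and differentiating
  -- `A + B` contributes `F D - F (A² + B²)`; the quadratic terms add up to `-F (A - B)² / 2`.
  have hderiv (x) : HasDerivAt (fun θ => sqrtProd f (rotationFlow hij θ x) *
      (A (rotationFlow hij θ x) + B (rotationFlow hij θ x)))
      (sqrtProd f x * D x - sqrtProd f x * (A x - B x) ^ 2 / 2) 0 := by
    have hφ₀ := (rotationFlow hij).map_zero_apply x
    have hi := hasDerivAt_rotationFlow hij x i
    have hj := hasDerivAt_rotationFlow hij x j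
    rw [if_pos rfl] at hi
    rw [if_neg hij.symm, if_pos rfl] at hj
    refine ((hasDerivAt_sqrtProd_rotationFlow hf hij x).fun_mul
      ((hasDerivAt_arcLogDeriv hi hj (by rw [hφ₀]) (by rw [hφ₀]) (hne i x)).fun_add
        (hasDerivAt_arcLogDeriv hj hi.fun_neg (by rw [hφ₀]) (by simp [hφ₀])
          (hne j x)))).congr_deriv ?_
    simp only [hφ₀, A, B, D, arcSecondDeriv, neg_sq]
    ring
  have hzero := integral_deriv_along_flow_eq_zero (rotationFlow hij)
    (measurePreserving_rotationFlow hij) (hF.mul (hA.add hB)) (by fun_prop) hderiv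
  rw [integral_sub (integrable_of_continuous (by fun_prop))
    (integrable_of_continuous (by fun_prop)), sub_eq_zero] at hzero
  change 0 ≤ ∫ x, sqrtProd f x * D x ∂sphereHaar n
  rw [hzero]
  exact integral_nonneg fun x => by have := sqrtProd_nonneg f x; positivity

theorem sum_sum_erase_nonneg {ι : Type*} [Fintype ι] [DecidableEq ι] {a : ι → ι → ℝ}
    (ha : ∀ i j, i ≠ j → 0 ≤ a i j + a j i) : 0 ≤ ∑ i, ∑ j ∈ Finset.univ.erase i, a i j := by
  have hswap : ∑ i, ∑ j ∈ Finset.univ.erase i, a i j = ∑ i, ∑ j ∈ Finset.univ.erase i, a j i :=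
    Finset.sum_comm' fun i j => by simp [ne_comm]
  have hsymm : 0 ≤ ∑ i, ∑ j ∈ Finset.univ.erase i, (a i j + a j i) :=
    Finset.sum_nonneg fun i _ => Finset.sum_nonneg fun j hj =>
      ha i j (Finset.ne_of_mem_erase hj).symm
  simp only [Finset.sum_add_distrib, ← hswap] at hsymm
  linarith

theorem integral_sqrtProd_mul_zonalLaplacian_nonneg
    (hf : ∀ k, ∀ x ∈ Icc (-1 : ℝ) 1, 0 < (f k).eval x) :
    0 ≤ ∫ x, sqrtProd f x * ∑ k, (zonalLaplacian n (f k)).eval (x.1 k) / (f k).eval (x.1 k)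
      ∂sphereHaar n := by
  let a (i j : Fin (n + 1)) (x : UnitSphere n) :=
    sqrtProd f x * (arcSecondDeriv (f i) (x.1 i) (x.1 j) / (f i).eval (x.1 i))
  have ha (i j) : Integrable (a i j) (sphereHaar n) := integrable_of_continuous <|
    (continuous_sqrtProd f).mul <| .div (by unfold arcSecondDeriv; fun_prop) (by fun_prop)
      fun x => (hf i _ (coord_mem_Icc x i)).ne'
  have hsum (x) : sqrtProd f x *
      ∑ k, (zonalLaplacian n (f k)).eval (x.1 k) / (f k).eval (x.1 k) =
      ∑ i, ∑ j ∈ Finset.univ.erase i, a i j x := by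
    simp only [a, eval_zonalLaplacian_coord, Finset.mul_sum, Finset.sum_div]
  simp only [hsum]
  rw [integral_finsetSum _ fun i _ => integrable_finsetSum _ fun j _ => ha i j]
  simp only [integral_finsetSum _ fun j _ => ha _ j]
  refine sum_sum_erase_nonneg fun i j hij => ?_
  rw [← integral_add (ha i j) (ha j i)]
  simpa only [a, ← mul_add] using integral_sqrtProd_mul_arcSecondDeriv_nonneg hf hij

end Sphere

/-! ### Monotonicity along the heat flow -/

section SphereHeat

theorem eval_heat_pos {n : ℕ} {q : ℕ →₀ ℝ[X]} (hn : 1 ≤ n) (hq : IsEigenfamily n q)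
    (hpos : ∀ x ∈ Icc (-1 : ℝ) 1, 0 < (heat n q 1).eval x) {r : ℝ} (hr : r ∈ Ioc (0 : ℝ) 1) {x : ℝ}
    (hx : x ∈ Icc (-1 : ℝ) 1) : 0 < (heat n q r).eval x := by
  obtain ⟨x₀, hx₀, hmin⟩ := (isCompact_Icc (a := (-1 : ℝ)) (b := 1)).exists_isMinOn
    ⟨x, hx⟩ (heat n q 1).continuousOn
  exact (hpos x₀ hx₀).trans_le (le_eval_heat hn hq hmin hr hx)

variable {n : ℕ} {q : Fin (n + 1) → ℕ →₀ ℝ[X]}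

theorem continuous_sqrtProd_heat (q : Fin (n + 1) → ℕ →₀ ℝ[X]) :
    Continuous fun z : ℝ × UnitSphere n => sqrtProd (fun k => heat n (q k) z.1) z.2 := by
  unfold sqrtProd
  exact continuous_finsetProd _ fun k _ => Real.continuous_sqrt.comp <|
    (continuous_eval_heat n (q k)).comp (f := fun z : ℝ × UnitSphere n => (z.1, z.2.1 k))
      (by fun_prop)

theorem hasDerivAt_integral_sqrtProd_heat (hn : 1 ≤ n) (hq : ∀ k, IsEigenfamily n (q k))
    (hpos : ∀ k, ∀ x ∈ Icc (-1 : ℝ) 1, 0 < (heat n (q k) 1).eval x) {r : ℝ}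
    (hr : r ∈ Ioo (0 : ℝ) 1) :
    HasDerivAt (fun r => ∫ x, sqrtProd (fun k => heat n (q k) r) x ∂sphereHaar n)
      (-(1 / (2 * r)) * ∫ x, sqrtProd (fun k => heat n (q k) r) x *
        ∑ k, (zonalLaplacian n (heat n (q k) r)).eval (x.1 k) / (heat n (q k) r).eval (x.1 k)
        ∂sphereHaar n) r := by
  have hpos' {τ : ℝ} (hτ : τ ∈ Ioo (0 : ℝ) 1) (k) (x : UnitSphere n) :
      0 < (heat n (q k) τ).eval (x.1 k) :=
    eval_heat_pos hn (hq k) (hpos k) (Ioo_subset_Ioc_self hτ) (coord_mem_Icc x k)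
  have hcoord (k) : Continuous fun z : ℝ × UnitSphere n => (z.1, z.2.1 k) := by fun_prop
  have hsqrt := continuous_sqrtProd_heat q
  rw [← integral_const_mul]
  refine hasDerivAt_integral_of_continuousOn (Ioo_mem_nhds hr.1 hr.2)
    (F' := fun τ x => -(1 / (2 * τ)) * (sqrtProd (fun k => heat n (q k) τ) x *
      ∑ k, (zonalLaplacian n (heat n (q k) τ)).eval (x.1 k) / (heat n (q k) τ).eval (x.1 k)))
    (fun τ _ => hsqrt.comp (.prodMk_right τ)) ?_ fun τ hτ x => ?_
  · refine .mul (.neg (.div (by fun_prop) (by fun_prop) ?_))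
      (hsqrt.continuousOn.mul (continuousOn_finsetSum _ fun k _ => .div
        ((continuous_eval_zonalLaplacian_heat (hq k)).comp (hcoord k)).continuousOn
        ((continuous_eval_heat n (q k)).comp (hcoord k)).continuousOn ?_))
    · exact fun z hz => mul_ne_zero two_ne_zero hz.1.1.ne'
    · exact fun z hz => (hpos' hz.1 k z.2).ne'
  · refine (hasDerivAt_prod_sqrt _ (fun k _ => hasDerivAt_eval_heat (hq k) hτ.1.ne' (x.1 k))
      fun k _ => hpos' hτ k x).congr_deriv ?_
    simp only [sqrtProd, Finset.mul_sum]
    refine Finset.sum_congr rfl fun k _ => ?_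
    have := (hpos' hτ k x).ne'
    have := hτ.1.ne'
    field_simp

theorem antitoneOn_integral_sqrtProd_heat (hn : 1 ≤ n) (hq : ∀ k, IsEigenfamily n (q k))
    (hpos : ∀ k, ∀ x ∈ Icc (-1 : ℝ) 1, 0 < (heat n (q k) 1).eval x) :
    AntitoneOn (fun r => ∫ x, sqrtProd (fun k => heat n (q k) r) x ∂sphereHaar n) (Icc 0 1) := by
  have hcont : Continuous fun r => ∫ x, sqrtProd (fun k => heat n (q k) r) x ∂sphereHaar n := by
    simpa only [Measure.restrict_univ] using continuous_parametric_integral_of_continuous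
      (s := univ) (continuous_sqrtProd_heat q) isCompact_univ
  refine antitoneOn_of_hasDerivWithinAt_nonpos (convex_Icc 0 1) hcont.continuousOn
    (fun r hr => (hasDerivAt_integral_sqrtProd_heat hn hq hpos
      (by rwa [interior_Icc] at hr)).hasDerivWithinAt) fun r hr => ?_
  rw [interior_Icc] at hr
  have hr₀ : 0 ≤ 1 / (2 * r) := by have := hr.1; positivity
  rw [neg_mul]
  exact neg_nonpos.2 <| mul_nonneg hr₀ <| integral_sqrtProd_mul_zonalLaplacian_nonneg
    fun k x hx => eval_heat_pos hn (hq k) (hpos k) (Ioo_subset_Ioc_self hr) hx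

/-- The mean of `p(x_i)` over the sphere, as a linear functional of the polynomial `p`. -/
noncomputable def coordMean (i : Fin (n + 1)) : ℝ[X] →ₗ[ℝ] ℝ where
  toFun p := ∫ x : UnitSphere n, p.eval (x.1 i) ∂sphereHaar n
  map_add' p₁ p₂ := by
    simp only [eval_add]
    exact integral_add (integrable_of_continuous (by fun_prop))
      (integrable_of_continuous (by fun_prop))
  map_smul' a p := by
    simp only [eval_smul, smul_eq_mul, RingHom.id_apply]
    exact integral_const_mul _ _

theorem coordMean_apply (i : Fin (n + 1)) (p : ℝ[X]) :
    coordMean i p = ∫ x : UnitSphere n, p.eval (x.1 i) ∂sphereHaar n :=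
  rfl

theorem integral_sqrtProd_le (hn : 1 ≤ n) {f : Fin (n + 1) → ℝ[X]}
    (hf : ∀ k, ∀ x ∈ Icc (-1 : ℝ) 1, 0 < (f k).eval x) :
    ∫ x, sqrtProd f x ∂sphereHaar n ≤ ∏ k, √(coordMean k (f k)) := by
  choose q hq hq₁ using fun k => exists_isEigenfamily_heat_one_eq hn (f k)
  choose a ha using fun k => exists_heat_zero_eq_C hn (hq k)
  have hmean (k) : coordMean k (f k) = a k := by
    rw [← hq₁, ← map_heat_eq_map_heat_one (hq k) (integral_zonalLaplacian_coord · k) 0, ha,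
      coordMean_apply]
    simp
  calc ∫ x, sqrtProd f x ∂sphereHaar n
      = ∫ x, sqrtProd (fun k => heat n (q k) 1) x ∂sphereHaar n := by simp only [hq₁]
    _ ≤ ∫ x, sqrtProd (fun k => heat n (q k) 0) x ∂sphereHaar n :=
        antitoneOn_integral_sqrtProd_heat hn hq (by simpa only [hq₁] using hf)
          (left_mem_Icc.2 zero_le_one) (right_mem_Icc.2 zero_le_one) zero_le_one
    _ = ∏ k, √(coordMean k (f k)) := by simp [sqrtProd, ha, hmean]

end SphereHeat

/-! ### Passage to measurable functions -/

section Approximation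

variable {a b : ℝ}

theorem exists_pos_polynomial_near_of_continuousOn {f : ℝ → ℝ} (hf : ContinuousOn f (Icc a b))
    (hf₀ : ∀ x ∈ Icc a b, 0 ≤ f x) {ε : ℝ} (hε : 0 < ε) :
    ∃ p : ℝ[X], ∀ x ∈ Icc a b, 0 < p.eval x ∧ |p.eval x - f x| ≤ ε := by
  obtain ⟨p, hp⟩ := exists_polynomial_near_of_continuousOn a b (fun x => f x + ε / 2)
    (hf.add continuousOn_const) (ε / 2) (half_pos hε)
  refine ⟨p, fun x hx => ?_⟩
  obtain ⟨hlower, hupper⟩ := abs_lt.1 (hp x hx)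
  exact ⟨by linarith [hf₀ x hx], abs_le.2 ⟨by linarith, by linarith⟩⟩

variable {ν : Measure ℝ} [IsFiniteMeasure ν] {F : ℝ → ℝ}

theorem exists_pos_polynomial_lintegral_sub_le (hν : ∀ᵐ x ∂ν, x ∈ Icc a b) (hF : Integrable F ν)
    (hF₀ : 0 ≤ F) {ε : ℝ≥0∞} (hε : ε ≠ 0) :
    ∃ p : ℝ[X], (∀ x ∈ Icc a b, 0 < p.eval x) ∧ ∫⁻ x, ‖p.eval x - F x‖ₑ ∂ν ≤ ε := by
  have hε₂ : ε / 2 ≠ 0 := (ENNReal.half_pos hε).ne'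
  obtain ⟨g, hg, -⟩ := hF.exists_boundedContinuous_lintegral_sub_le hε₂
  obtain ⟨δ, hδ, hδν⟩ := ENNReal.exists_nnreal_pos_mul_lt (measure_ne_top ν univ) hε₂
  obtain ⟨p, hp⟩ := exists_pos_polynomial_near_of_continuousOn (f := fun x => |g x|)
    (by fun_prop : ContinuousOn _ (Icc a b)) (fun x _ => abs_nonneg _) (NNReal.coe_pos.2 hδ)
  refine ⟨p, fun x hx => (hp x hx).1, ?_⟩
  have hbound : ∀ᵐ x ∂ν, ‖p.eval x - F x‖ₑ ≤ ‖F x - g x‖ₑ + δ := by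
    filter_upwards [hν] with x hx
    have habs : |p.eval x - F x| ≤ |F x - g x| + δ := by
      have h₁ := abs_sub_le (p.eval x) |g x| (F x)
      have h₂ := abs_abs_sub_abs_le_abs_sub (g x) (F x)
      rw [abs_of_nonneg (hF₀ x), abs_sub_comm (g x)] at h₂
      linarith [(hp x hx).2]
    rw [Real.enorm_eq_ofReal_abs, Real.enorm_eq_ofReal_abs, ← ENNReal.ofReal_coe_nnreal,
      ← ENNReal.ofReal_add (abs_nonneg _) δ.coe_nonneg]
    exact ENNReal.ofReal_le_ofReal habs
  calc ∫⁻ x, ‖p.eval x - F x‖ₑ ∂ν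
      ≤ ∫⁻ x, (‖F x - g x‖ₑ + δ) ∂ν := lintegral_mono_ae hbound
    _ = ∫⁻ x, ‖F x - g x‖ₑ ∂ν + δ * ν univ := by
        rw [lintegral_add_right _ measurable_const, lintegral_const]
    _ ≤ ε / 2 + ε / 2 := add_le_add hg hδν.le
    _ = ε := ENNReal.add_halves ε

theorem exists_pos_polynomial_seq_tendsto_ae (hν : ∀ᵐ x ∂ν, x ∈ Icc a b) (hF : Integrable F ν)
    (hF₀ : 0 ≤ F) :
    ∃ p : ℕ → ℝ[X], (∀ m, ∀ x ∈ Icc a b, 0 < (p m).eval x) ∧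
      (∀ᵐ x ∂ν, Tendsto (fun m => (p m).eval x) atTop (𝓝 (F x))) ∧
      Tendsto (fun m => ∫ x, (p m).eval x ∂ν) atTop (𝓝 (∫ x, F x ∂ν)) := by
  obtain ⟨ε, -, hε, hε_lim⟩ := exists_seq_strictAnti_tendsto' (zero_lt_one' ℝ≥0∞)
  choose p hp hpε using fun m =>
    exists_pos_polynomial_lintegral_sub_le hν hF hF₀ (hε m).1.ne'
  have hL1 : Tendsto (fun m => ∫⁻ x, ‖(p m).eval x - F x‖ₑ ∂ν) atTop (𝓝 0) :=
    tendsto_of_tendsto_of_tendsto_of_le_of_le tendsto_const_nhds hε_lim (fun _ => zero_le) hpε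
  have hint (m) : Integrable (fun x => (p m).eval x) ν := by
    rw [← Measure.restrict_eq_self_of_ae_mem hν]
    exact (p m).continuousOn.integrableOn_Icc
  have hmeasure : TendstoInMeasure ν (fun m x => (p m).eval x) atTop F :=
    tendstoInMeasure_of_tendsto_eLpNorm one_ne_zero (fun m => (hint m).1) hF.1
      (by simpa only [eLpNorm_one_eq_lintegral_enorm, Pi.sub_apply] using hL1)
  obtain ⟨φ, hφ, hae⟩ := hmeasure.exists_seq_tendsto_ae
  exact ⟨p ∘ φ, fun m => hp (φ m), hae,
    (tendsto_integral_of_L1 F hF.1 (.of_forall hint) hL1).comp hφ.tendsto_atTop⟩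

end Approximation

section MeasurableFunctions

variable {n : ℕ}

theorem measurable_coord (k : Fin (n + 1)) : Measurable fun x : UnitSphere n => x.1 k := by
  fun_prop

theorem lintegral_ofReal_prod_sqrt_le (hn : 1 ≤ n) {F : Fin (n + 1) → ℝ → ℝ} (hF₀ : ∀ k, 0 ≤ F k)
    (hF : ∀ k, Integrable (F k) ((sphereHaar n).map fun x => x.1 k)) :
    ∫⁻ x, ENNReal.ofReal (∏ k, √(F k (x.1 k))) ∂sphereHaar n ≤
      ENNReal.ofReal (∏ k, √(∫ x : UnitSphere n, F k (x.1 k) ∂sphereHaar n)) := by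
  have hν (k) : ∀ᵐ t ∂(sphereHaar n).map fun x => x.1 k, t ∈ Icc (-1 : ℝ) 1 :=
    (ae_map_iff (measurable_coord k).aemeasurable measurableSet_Icc).2
      (.of_forall fun x => coord_mem_Icc x k)
  choose p hpos hae hlim using fun k => exists_pos_polynomial_seq_tendsto_ae (hν k) (hF k) (hF₀ k)
  have hae_prod : ∀ᵐ x ∂sphereHaar n, Tendsto (fun m => ENNReal.ofReal (sqrtProd (p · m) x)) atTop
      (𝓝 (ENNReal.ofReal (∏ k, √(F k (x.1 k))))) := by
    filter_upwards [ae_all_iff.2 fun k => ae_of_ae_map (measurable_coord k).aemeasurable (hae k)]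
      with x hx
    exact ENNReal.tendsto_ofReal (tendsto_finsetProd _ fun k _ => (hx k).sqrt)
  have hmean (k) : Tendsto (fun m => coordMean k (p k m)) atTop
      (𝓝 (∫ x : UnitSphere n, F k (x.1 k) ∂sphereHaar n)) := by
    have h := hlim k
    rw [integral_map (measurable_coord k).aemeasurable (hF k).1] at h
    refine h.congr fun m => ?_
    rw [integral_map (measurable_coord k).aemeasurable (by fun_prop), coordMean_apply]
  calc ∫⁻ x, ENNReal.ofReal (∏ k, √(F k (x.1 k))) ∂sphereHaar n
      = ∫⁻ x, liminf (fun m => ENNReal.ofReal (sqrtProd (p · m) x)) atTop ∂sphereHaar n :=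
        lintegral_congr_ae (hae_prod.mono fun x hx => hx.liminf_eq.symm)
    _ ≤ liminf (fun m => ∫⁻ x, ENNReal.ofReal (sqrtProd (p · m) x) ∂sphereHaar n) atTop :=
        lintegral_liminf_le fun m => (continuous_sqrtProd _).measurable.ennreal_ofReal
    _ = liminf (fun m => ENNReal.ofReal (∫ x, sqrtProd (p · m) x ∂sphereHaar n)) atTop := by
        simp only [ofReal_integral_eq_lintegral_ofReal
          (integrable_of_continuous (continuous_sqrtProd _)) (.of_forall (sqrtProd_nonneg _))]
    _ ≤ liminf (fun m => ENNReal.ofReal (∏ k, √(coordMean k (p k m)))) atTop :=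
        liminf_le_liminf <| .of_forall fun m =>
          ENNReal.ofReal_le_ofReal (integral_sqrtProd_le hn fun k => hpos k m)
    _ = ENNReal.ofReal (∏ k, √(∫ x : UnitSphere n, F k (x.1 k) ∂sphereHaar n)) :=
        (ENNReal.tendsto_ofReal (tendsto_finsetProd _ fun k _ => (hmean k).sqrt)).liminf_eq

theorem ofReal_sqrt_toReal {c : ℝ≥0∞} (hc : c ≠ ∞) :
    ENNReal.ofReal √c.toReal = c ^ ((1 : ℝ) / 2) := by
  rw [Real.sqrt_eq_rpow, ENNReal.toReal_rpow, ENNReal.ofReal_toReal]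
  exact ENNReal.rpow_ne_top_of_nonneg (by norm_num) hc

theorem lintegral_prod_le_of_lintegral_sq_ne_top (hn : 1 ≤ n) {g : Fin (n + 1) → ℝ → ℝ≥0∞}
    (hg : ∀ k, Measurable (g k))
    (hfin : ∀ k, ∫⁻ x : UnitSphere n, g k (x.1 k) ^ 2 ∂sphereHaar n ≠ ∞) :
    ∫⁻ x : UnitSphere n, ∏ k, g k (x.1 k) ∂sphereHaar n ≤
      ∏ k, (∫⁻ x : UnitSphere n, g k (x.1 k) ^ 2 ∂sphereHaar n) ^ ((1 : ℝ) / 2) := by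
  have hsq (k) : Measurable fun t => g k t ^ 2 := (hg k).pow_const 2
  have hsq_coord (k) : Measurable fun x : UnitSphere n => g k (x.1 k) ^ 2 :=
    (hsq k).comp (measurable_coord k)
  have hF (k) : Integrable (fun t => (g k t ^ 2).toReal) ((sphereHaar n).map fun x => x.1 k) :=
    integrable_toReal_of_lintegral_ne_top (hsq k).aemeasurable <| by
      rw [lintegral_map (hsq k) (measurable_coord k)]
      exact hfin k
  have hae : ∀ᵐ x : UnitSphere n ∂sphereHaar n, ∀ k, g k (x.1 k) ^ 2 < ∞ :=
    ae_all_iff.2 fun k => ae_lt_top (hsq_coord k) (hfin k)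
  calc ∫⁻ x : UnitSphere n, ∏ k, g k (x.1 k) ∂sphereHaar n
      = ∫⁻ x : UnitSphere n, ENNReal.ofReal (∏ k, √(g k (x.1 k) ^ 2).toReal) ∂sphereHaar n := by
        refine lintegral_congr_ae (hae.mono fun x hx => ?_)
        simp only [ENNReal.ofReal_prod_of_nonneg fun _ _ => Real.sqrt_nonneg _]
        refine Finset.prod_congr rfl fun k _ => ?_
        rw [ofReal_sqrt_toReal (hx k).ne, one_div]
        exact (ENNReal.pow_rpow_inv_natCast two_ne_zero _).symm
    _ ≤ ENNReal.ofReal (∏ k, √(∫ x : UnitSphere n, (g k (x.1 k) ^ 2).toReal ∂sphereHaar n)) :=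
        lintegral_ofReal_prod_sqrt_le hn (F := fun k t => (g k t ^ 2).toReal)
          (fun _ _ => ENNReal.toReal_nonneg) hF
    _ = ∏ k, (∫⁻ x : UnitSphere n, g k (x.1 k) ^ 2 ∂sphereHaar n) ^ ((1 : ℝ) / 2) := by
        rw [ENNReal.ofReal_prod_of_nonneg fun _ _ => Real.sqrt_nonneg _]
        refine Finset.prod_congr rfl fun k _ => ?_
        rw [integral_toReal (hsq_coord k).aemeasurable (ae_all_iff.1 hae k),
          ofReal_sqrt_toReal (hfin k)]

theorem lintegral_prod_eq_zero_of_lintegral_sq_eq_zero {α ι : Type*} [MeasurableSpace α] [Fintype ι]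
    {μ : Measure α} {g : ι → α → ℝ≥0∞} {k : ι} (hg : Measurable (g k))
    (hk : ∫⁻ x, g k x ^ 2 ∂μ = 0) : ∫⁻ x, ∏ i, g i x ∂μ = 0 := by
  refine lintegral_eq_zero_of_ae_eq_zero ?_
  filter_upwards [(lintegral_eq_zero_iff (hg.pow_const 2)).1 hk] with x hx
  exact Finset.prod_eq_zero (Finset.mem_univ k) (pow_eq_zero_iff two_ne_zero |>.1 hx)

end MeasurableFunctions

/-- **Brascamp–Lieb inequality on the sphere** (Carlen–Lieb–Loss):
for nonnegative measurable functions `g 1, …, g (n+1)` of the coordinates,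
`∫_{S^n} ∏ g_i(x_i) dσ_n ≤ ∏ (∫_{S^n} g_i(x_i)^2 dσ_n)^{1/2}`. -/
theorem brascamp_lieb_sphere (n : ℕ) (hn : 1 ≤ n)
    (g : Fin (n + 1) → ℝ → ℝ≥0∞) (hg : ∀ i, Measurable (g i)) :
    ∫⁻ x : sphere (0 : EuclideanSpace ℝ (Fin (n + 1))) 1,
        ∏ i, g i ((x : EuclideanSpace ℝ (Fin (n + 1))) i) ∂(sphereHaar n) ≤
      ∏ i, (∫⁻ x : sphere (0 : EuclideanSpace ℝ (Fin (n + 1))) 1,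
          (g i ((x : EuclideanSpace ℝ (Fin (n + 1))) i)) ^ 2 ∂(sphereHaar n)) ^ ((1 : ℝ) / 2) := by
  by_cases hzero : ∃ k, ∫⁻ x : UnitSphere n, g k (x.1 k) ^ 2 ∂sphereHaar n = 0
  · obtain ⟨k, hk⟩ := hzero
    exact (lintegral_prod_eq_zero_of_lintegral_sq_eq_zero (g := fun k (x : UnitSphere n) =>
      g k (x.1 k)) ((hg k).comp (measurable_coord k)) hk).trans_le zero_le
  by_cases htop : ∃ k, ∫⁻ x : UnitSphere n, g k (x.1 k) ^ 2 ∂sphereHaar n = ∞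
  · obtain ⟨k, hk⟩ := htop
    push Not at hzero
    refine le_top.trans_eq (WithTop.prod_eq_top (Finset.mem_univ k) ?_ fun j _ => ?_).symm
    · rw [hk]
      exact ENNReal.top_rpow_of_pos one_half_pos
    · exact (ENNReal.rpow_eq_zero_iff_of_pos one_half_pos).not.2 (hzero j)
  exact lintegral_prod_le_of_lintegral_sq_ne_top hn hg (not_exists.1 htop)
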